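/- Let A be a Hopf algebra over a field k with bijective antipode S and let a, b ∈ A. The following are equivalent: (1) Δ(a)(1 ⊗ b) = Δ(b)(a ⊗ 1); (2) (b ⊗ 1)·((id ⊗ S)(Δ(a))) = a ⊗ b. Moreover, if these equivalent conditions hold then ab = ε(a)b = S(a)ε(b). -/

import Mathlib

/-!
The Galois map `β (x ⊗ y) = Δ(x)(1 ⊗ y)` is a linear automorphism of `A ⊗ A` with inverse
`x ⊗ y ↦ (id ⊗ S)(Δ(x))(1 ⊗ y)`, and `β ((x ⊗ 1) t) = Δ(x) β(t)`. Hence `β` carries the two sides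
of (2), `(b ⊗ 1)·β⁻¹(a ⊗ 1)` and `a ⊗ b`, to `Δ(b)(a ⊗ 1)` and `Δ(a)(1 ⊗ b)`, the two sides of (1).
The remaining identities are the images of (1) and (2) under `ε ⊗ id`.
-/

open scoped TensorProduct

noncomputable section

variable (k : Type*) [Field k] {A : Type*} [Ring A] [HopfAlgebra k A]

/-- `P` is a right group-like projection: a nonzero idempotent with
`Δ(P)(1 ⊗ P) = P ⊗ P = (1 ⊗ P)Δ(P)`. -/
def IsRightGroupLikeProjection (P : A) : Prop :=
  P ≠ 0 ∧ P * P = P ∧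
    Coalgebra.comul (R := k) P * ((1 : A) ⊗ₜ[k] P) = P ⊗ₜ[k] P ∧
    ((1 : A) ⊗ₜ[k] P) * Coalgebra.comul (R := k) P = P ⊗ₜ[k] P

/-- `P` is a left group-like projection: a nonzero idempotent with
`Δ(P)(P ⊗ 1) = P ⊗ P = (P ⊗ 1)Δ(P)`. -/
def IsLeftGroupLikeProjection (P : A) : Prop :=
  P ≠ 0 ∧ P * P = P ∧
    Coalgebra.comul (R := k) P * (P ⊗ₜ[k] (1 : A)) = P ⊗ₜ[k] P ∧
    (P ⊗ₜ[k] (1 : A)) * Coalgebra.comul (R := k) P = P ⊗ₜ[k] P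

/-- A two-sided group-like projection. -/
def IsTwoSidedGroupLikeProjection (P : A) : Prop :=
  IsRightGroupLikeProjection k P ∧ IsLeftGroupLikeProjection k P

/-- `N_P^l = {x : (1 ⊗ P)Δ(x) = x ⊗ P}`. -/
def NPlSet (P : A) : Set A :=
  {x : A | ((1 : A) ⊗ₜ[k] P) * Coalgebra.comul (R := k) x = x ⊗ₜ[k] P}

/-- `N_P^r = {x : Δ(x)(1 ⊗ P) = x ⊗ P}`. -/
def NPrSet (P : A) : Set A :=
  {x : A | Coalgebra.comul (R := k) x * ((1 : A) ⊗ₜ[k] P) = x ⊗ₜ[k] P}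

/-- `N_P = N_P^l ∩ N_P^r`. -/
def NPSet (P : A) : Set A := NPlSet k P ∩ NPrSet k P

/-- `V_P = {(μ ⊗ id)(Δ(P)) : μ ∈ A*}`, the smallest left coideal containing `P`. -/
def VPSet (P : A) : Set A :=
  {x : A | ∃ μ : A →ₗ[k] k,
    x = TensorProduct.lid k A ((TensorProduct.map μ LinearMap.id) (Coalgebra.comul (R := k) P))}

/-- A submodule `N ⊆ A` is a left coideal if `Δ(N) ⊆ A ⊗ N`. -/
def IsLeftCoideal (N : Submodule k A) : Prop :=
  ∀ x ∈ N, Coalgebra.comul (R := k) x ∈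
    LinearMap.range (TensorProduct.map (LinearMap.id : A →ₗ[k] A) N.subtype)

/-- A subalgebra `N ⊆ A` is a left coideal subalgebra if `Δ(N) ⊆ A ⊗ N`. -/
def IsLeftCoidealSubalgebra (N : Subalgebra k A) : Prop :=
  IsLeftCoideal k (Subalgebra.toSubmodule N)

open Coalgebra HopfAlgebra WithConv

section Convolution

variable {R C A : Type*} [CommSemiring R] [AddCommMonoid C] [Module R C] [Coalgebra R C]
  [Semiring A] [Algebra R A]

/-- The endomorphism `c ⊗ a ↦ c₁ ⊗ f(c₂) a` of `C ⊗ A` attached to a linear map `f : C → A`,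
taken in `WithConv` because `comulTwist` turns convolution products into compositions. -/
def comulTwist (f : WithConv (C →ₗ[R] A)) : Module.End R (C ⊗[R] A) :=
  (LinearMap.mul' R A).lTensor C ∘ₗ (TensorProduct.assoc R C A A).toLinearMap ∘ₗ
    (f.ofConv.lTensor C ∘ₗ comul).rTensor A

lemma comulTwist_tmul (f : WithConv (C →ₗ[R] A)) (c : C) (a : A) :
    comulTwist f (c ⊗ₜ a) = (LinearMap.mulRight R a ∘ₗ f.ofConv).lTensor C (comul c) := by
  have lTensor_mul_assoc_tmul :
      (LinearMap.mul' R A).lTensor C ∘ₗ (TensorProduct.assoc R C A A).toLinearMap ∘ₗ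
        (TensorProduct.mk R (C ⊗[R] A) A).flip a = (LinearMap.mulRight R a).lTensor C := by
    ext
    simp
  rw [LinearMap.lTensor_comp_apply, ← lTensor_mul_assoc_tmul]
  rfl

lemma comulTwist_one : comulTwist (1 : WithConv (C →ₗ[R] A)) = 1 := by
  ext c a
  simp [comulTwist_tmul, LinearMap.convOne_def, LinearMap.lTensor_comp]

lemma comulTwist_mul (f g : WithConv (C →ₗ[R] A)) :
    comulTwist (f * g) = comulTwist f * comulTwist g := by
  ext c a
  -- Both sides send `(p ⊗ q) ⊗ r` to `p ⊗ f(q) g(r) a`.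
  have mul_assoc_map :
      (LinearMap.mul' R A).lTensor C ∘ₗ (TensorProduct.assoc R C A A).toLinearMap ∘ₗ
          TensorProduct.map (f.ofConv.lTensor C) (LinearMap.mulRight R a ∘ₗ g.ofConv) =
        (LinearMap.mulRight R a ∘ₗ LinearMap.mul' R A ∘ₗ
            TensorProduct.map f.ofConv g.ofConv).lTensor C ∘ₗ
          (TensorProduct.assoc R C C C).toLinearMap := by
    ext
    simp [mul_assoc]
  symm
  calc comulTwist f (comulTwist g (c ⊗ₜ a))
    _ = (LinearMap.mul' R A).lTensor C (TensorProduct.assoc R C A A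
          (TensorProduct.map (f.ofConv.lTensor C) (LinearMap.mulRight R a ∘ₗ g.ofConv)
            (comul.rTensor C (comul c)))) := by
      rw [comulTwist_tmul, LinearMap.map_rTensor, ← LinearMap.rTensor_comp_lTensor]
      rfl
    _ = (LinearMap.mulRight R a ∘ₗ LinearMap.mul' R A ∘ₗ
          TensorProduct.map f.ofConv g.ofConv).lTensor C (comul.lTensor C (comul c)) := by
      rw [← coassoc_apply]
      exact LinearMap.congr_fun mul_assoc_map _
    _ = comulTwist (f * g) (c ⊗ₜ a) := by
      rw [comulTwist_tmul, ← LinearMap.lTensor_comp_apply]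
      rfl

end Convolution

section Counit

variable (R : Type*) {A B : Type*} [CommSemiring R] [Semiring A] [Bialgebra R A]
  [Semiring B] [Algebra R B]

/-- The algebra homomorphism `ε ⊗ id : A ⊗ B → B`, with `R ⊗ B` identified with `B`. -/
def counitTensorId : A ⊗[R] B →ₐ[R] B :=
  (Algebra.TensorProduct.lid R B).toAlgHom.comp
    (Algebra.TensorProduct.map (Bialgebra.counitAlgHom R A) (.id R B))

lemma counitTensorId_tmul (a : A) (b : B) :
    counitTensorId R (a ⊗ₜ[R] b) = counit (R := R) a • b := by
  simp [counitTensorId]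

lemma counitTensorId_lTensor_comul (f : A →ₗ[R] B) (a : A) :
    counitTensorId R (f.lTensor A (comul a)) = f a := by
  have counitTensorId_comp_lTensor : (counitTensorId R).toLinearMap ∘ₗ f.lTensor A =
      f ∘ₗ (TensorProduct.lid R A).toLinearMap ∘ₗ counit.rTensor A := by
    ext
    simp [counitTensorId_tmul]
  simpa using LinearMap.congr_fun counitTensorId_comp_lTensor (comul a)

lemma counitTensorId_comul (a : A) : counitTensorId R (comul (R := R) a) = a := by
  simpa using counitTensorId_lTensor_comul R .id a

end Counit

section Bialgebra

variable (R : Type*) {A : Type*} [CommSemiring R] [Semiring A] [Bialgebra R A]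

/-- The Galois map `x ⊗ y ↦ Δ(x)(1 ⊗ y)` of a bialgebra, defined as the twist by the identity
so that in a Hopf algebra its inverse is the twist by the antipode. -/
def galoisMap : Module.End R (A ⊗[R] A) :=
  comulTwist (toConv .id)

lemma galoisMap_tmul (x y : A) :
    galoisMap R (x ⊗ₜ[R] y) = comul (R := R) x * ((1 : A) ⊗ₜ[R] y) := by
  have lTensor_mulRight :
      (LinearMap.mulRight R y).lTensor A = LinearMap.mulRight R ((1 : A) ⊗ₜ[R] y) := by
    rw [LinearMap.mulRight_tmul, LinearMap.mulRight_one, LinearMap.lTensor]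
  exact (comulTwist_tmul (toConv .id) x y).trans (LinearMap.congr_fun lTensor_mulRight (comul x))

lemma galoisMap_tmul_one_mul (x : A) (t : A ⊗[R] A) :
    galoisMap R ((x ⊗ₜ[R] (1 : A)) * t) = comul (R := R) x * galoisMap R t := by
  induction t with
  | zero => simp
  | add u v hu hv => simp only [mul_add, map_add, hu, hv]
  | tmul p q => simp [galoisMap_tmul, mul_assoc]

lemma mul_eq_counit_smul_of_comul_mul_eq {a b : A}
    (h : comul (R := R) a * ((1 : A) ⊗ₜ[R] b) = comul (R := R) b * (a ⊗ₜ[R] (1 : A))) :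
    a * b = counit (R := R) a • b := by
  simpa [counitTensorId_tmul, counitTensorId_comul] using congr(counitTensorId R $h)

end Bialgebra

section HopfAlgebra

variable (R : Type*) {A : Type*} [CommSemiring R] [Semiring A] [HopfAlgebra R A]

lemma galoisMap_injective : Function.Injective (galoisMap R : Module.End R (A ⊗[R] A)) := by
  have antipode_twist_mul :
      comulTwist (toConv (antipode R)) * galoisMap R = (1 : Module.End R (A ⊗[R] A)) := by
    rw [galoisMap, ← comulTwist_mul, LinearMap.antipode_mul_id, comulTwist_one]
  exact LinearMap.injective_of_comp_eq_id _ _ antipode_twist_mul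

lemma galoisMap_lTensor_antipode_comul (a : A) :
    galoisMap R ((antipode R).lTensor A (comul (R := R) a)) = a ⊗ₜ[R] (1 : A) := by
  have mul_antipode_twist :
      galoisMap R * comulTwist (toConv (antipode R)) = (1 : Module.End R (A ⊗[R] A)) := by
    rw [galoisMap, ← comulTwist_mul, LinearMap.id_mul_antipode, comulTwist_one]
  simpa [comulTwist_tmul] using LinearMap.congr_fun mul_antipode_twist (a ⊗ₜ 1)

lemma comul_mul_eq_iff (a b : A) :
    comul (R := R) a * ((1 : A) ⊗ₜ[R] b) = comul (R := R) b * (a ⊗ₜ[R] (1 : A)) ↔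
      (b ⊗ₜ[R] (1 : A)) * (antipode R).lTensor A (comul (R := R) a) = a ⊗ₜ[R] b := by
  rw [eq_comm, ← galoisMap_tmul, ← galoisMap_lTensor_antipode_comul, ← galoisMap_tmul_one_mul,
    (galoisMap_injective R).eq_iff]

lemma counit_smul_antipode_eq_of_mul_lTensor_antipode_comul_eq {a b : A}
    (h : (b ⊗ₜ[R] (1 : A)) * (antipode R).lTensor A (comul (R := R) a) = a ⊗ₜ[R] b) :
    counit (R := R) b • antipode R a = counit (R := R) a • b := by
  simpa [counitTensorId_tmul, counitTensorId_lTensor_comul] using congr(counitTensorId R $h)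

theorem statement16_general (a b : A) :
    (comul (R := R) a * ((1 : A) ⊗ₜ[R] b) = comul (R := R) b * (a ⊗ₜ[R] (1 : A)) ↔
      (b ⊗ₜ[R] (1 : A)) * (antipode R).lTensor A (comul (R := R) a) = a ⊗ₜ[R] b) ∧
    (comul (R := R) a * ((1 : A) ⊗ₜ[R] b) = comul (R := R) b * (a ⊗ₜ[R] (1 : A)) →
      a * b = counit (R := R) a • b ∧ a * b = counit (R := R) b • antipode R a) := by
  refine ⟨comul_mul_eq_iff R a b, fun h ↦ ?_⟩
  have hab := mul_eq_counit_smul_of_comul_mul_eq R h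
  have hS := counit_smul_antipode_eq_of_mul_lTensor_antipode_comul_eq R
    ((comul_mul_eq_iff R a b).mp h)
  exact ⟨hab, hab.trans hS.symm⟩

end HopfAlgebra

/-- Theorem: `Δ(a)(1 ⊗ b) = Δ(b)(a ⊗ 1)` iff `(b ⊗ 1)·(id ⊗ S)(Δ(a)) = a ⊗ b`;
moreover these conditions imply `ab = ε(a)b = S(a)ε(b)`. -/
theorem statement16
    (hS : Function.Bijective (HopfAlgebra.antipode (R := k) : A →ₗ[k] A))
    (a b : A) :
    (Coalgebra.comul (R := k) a * ((1 : A) ⊗ₜ[k] b) =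
        Coalgebra.comul (R := k) b * (a ⊗ₜ[k] (1 : A)) ↔
      (b ⊗ₜ[k] (1 : A)) *
          (TensorProduct.map LinearMap.id (HopfAlgebra.antipode (R := k))
            (Coalgebra.comul (R := k) a)) = a ⊗ₜ[k] b) ∧
    (Coalgebra.comul (R := k) a * ((1 : A) ⊗ₜ[k] b) =
        Coalgebra.comul (R := k) b * (a ⊗ₜ[k] (1 : A)) →
      a * b = Coalgebra.counit (R := k) a • b ∧
      a * b = Coalgebra.counit (R := k) b • HopfAlgebra.antipode (R := k) a) :=
  statement16_general k a b
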